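/- ∑_{k=1}^∞ (5832/1225)^k / (k² · C(3k,k)) = 6·arctan²(√3/2) − (1/2)·log²(25/7). -/

import Mathlib

open Real

/-!
Let `F z = ∑_{n ≥ 1} zⁿ / (n² C(3n, n))`. By the Beta integral, `1 / (n C(3n, n))` is the integral
of `x² (x² (1 - x))ⁿ⁻¹` over `[0, 1]`, and `x² (1 - x) ≤ 4/27` there, so for `|z| < 27/4` summing a
geometric series gives `F' z = ∫₀¹ x² / (1 - z x² (1 - x)) dx`.

The cubic `1 - z x² (1 - x)` has the root `x = -(1 + t²) / (3 - t²)` exactly when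
`z = (3 - t²)³ / (4 (1 + t²)²)`; its other two roots are then `2 (1 ± i t) / (3 - t²)`. With this
parametrization the integral is elementary, and `d/dt F (z t)` turns out to be the derivative of
`6 (π/3 - arctan t)² - log² (4 / (1 + t²)) / 2`. Both functions vanish at `t = √3`, hence they
agree. The value `z = 5832/1225` is attained at `t = √3 / 5`.
-/

open Set

section Series

variable {x z : ℝ}

lemma integral_pow_mul_one_sub_pow (m n : ℕ) :
    ∫ x in (0 : ℝ)..1, x ^ m * (1 - x) ^ n =
      1 / ((n + 1) * (((m + n + 1).choose (n + 1) : ℕ) : ℝ)) := by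
  have beta_eq : ((∫ x in (0 : ℝ)..1, x ^ m * (1 - x) ^ n : ℝ) : ℂ) =
      Complex.betaIntegral (m + 1) (n + 1) := by
    rw [← intervalIntegral.integral_ofReal]
    simp [Complex.betaIntegral]
  have re_pos (k : ℕ) : 0 < (k + 1 : ℂ).re := by
    rw [Complex.add_re, Complex.natCast_re, Complex.one_re]
    positivity
  have gamma_eq := Complex.Gamma_mul_Gamma_eq_betaIntegral (re_pos m) (re_pos n)
  rw [← beta_eq, show (m + 1 + (n + 1) : ℂ) = (m + n + 1 : ℕ) + 1 by push_cast; ring] at gamma_eq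
  simp only [Complex.Gamma_nat_eq_factorial] at gamma_eq
  have factorial_eq : (m.factorial * n.factorial : ℝ) =
      (m + n + 1).factorial * ∫ x in (0 : ℝ)..1, x ^ m * (1 - x) ^ n := by
    exact_mod_cast gamma_eq
  rw [Nat.cast_choose ℝ (by lia), show m + n + 1 - (n + 1) = m by lia, Nat.factorial_succ n]
  push_cast
  field_simp
  linarith

lemma integral_sq_mul_mul_pow (z : ℝ) (k : ℕ) :
    ∫ x in (0 : ℝ)..1, x ^ 2 * (z * (x ^ 2 * (1 - x))) ^ k =
      z ^ k / ((k + 1) * (((3 * (k + 1)).choose (k + 1) : ℕ) : ℝ)) := by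
  rw [div_eq_mul_one_div, show 3 * (k + 1) = 2 * k + 2 + k + 1 by ring,
    ← integral_pow_mul_one_sub_pow, ← intervalIntegral.integral_const_mul]
  congr 1 with x
  rw [mul_pow, mul_pow, ← pow_mul]
  ring

lemma sq_mul_one_sub_le (hx : 0 ≤ x) : x ^ 2 * (1 - x) ≤ 4 / 27 := by
  have : 0 ≤ (x + 1 / 3) * (x - 2 / 3) ^ 2 := by positivity
  linarith

lemma norm_mul_sq_mul_one_sub_le (z : ℝ) (hx : x ∈ Icc (0 : ℝ) 1) :
    ‖z * (x ^ 2 * (1 - x))‖ ≤ |z| * (4 / 27) := by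
  have := sub_nonneg.2 hx.2
  rw [norm_mul, norm_of_nonneg (by positivity : 0 ≤ x ^ 2 * (1 - x)), norm_eq_abs]
  gcongr
  exact sq_mul_one_sub_le hx.1

lemma norm_sq_mul_mul_pow_le (z : ℝ) (hx : x ∈ Icc (0 : ℝ) 1) (k : ℕ) :
    ‖x ^ 2 * (z * (x ^ 2 * (1 - x))) ^ k‖ ≤ (|z| * (4 / 27)) ^ k := by
  rw [norm_mul, norm_pow _ k, norm_of_nonneg (sq_nonneg x)]
  calc x ^ 2 * ‖z * (x ^ 2 * (1 - x))‖ ^ k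
      ≤ ‖z * (x ^ 2 * (1 - x))‖ ^ k :=
        mul_le_of_le_one_left (by positivity) (pow_le_one₀ hx.1 hx.2)
    _ ≤ (|z| * (4 / 27)) ^ k :=
        pow_le_pow_left₀ (norm_nonneg _) (norm_mul_sq_mul_one_sub_le z hx) k

lemma uIoc_zero_one_subset_Icc : uIoc (0 : ℝ) 1 ⊆ Icc 0 1 :=
  uIoc_of_le (zero_le_one (α := ℝ)) ▸ Ioc_subset_Icc_self

lemma norm_pow_div_mul_choose_le (z : ℝ) (k : ℕ) :
    ‖z ^ k / ((k + 1) * (((3 * (k + 1)).choose (k + 1) : ℕ) : ℝ))‖ ≤ (|z| * (4 / 27)) ^ k := by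
  rw [← integral_sq_mul_mul_pow]
  have norm_le : ∀ x ∈ uIoc (0 : ℝ) 1,
      ‖x ^ 2 * (z * (x ^ 2 * (1 - x))) ^ k‖ ≤ (|z| * (4 / 27)) ^ k := fun x hx ↦
    norm_sq_mul_mul_pow_le z (uIoc_zero_one_subset_Icc hx) k
  simpa using intervalIntegral.norm_integral_le_of_norm_le_const norm_le

lemma hasSum_pow_div_mul_choose (hz : |z| < 27 / 4) :
    HasSum (fun k : ℕ ↦ z ^ k / ((k + 1) * (((3 * (k + 1)).choose (k + 1) : ℕ) : ℝ)))
      (∫ x in (0 : ℝ)..1, x ^ 2 / (1 - z * (x ^ 2 * (1 - x)))) := by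
  have ratio_lt_one : |z| * (4 / 27) < 1 := by linarith
  simp only [← integral_sq_mul_mul_pow]
  refine intervalIntegral.hasSum_integral_of_dominated_convergence
    (fun k _ ↦ (|z| * (4 / 27)) ^ k) (fun k ↦ Continuous.aestronglyMeasurable (by fun_prop))
    (fun k ↦ .of_forall fun x hx ↦ norm_sq_mul_mul_pow_le z (uIoc_zero_one_subset_Icc hx) k)
    (.of_forall fun _ _ ↦ summable_geometric_of_lt_one (by positivity) ratio_lt_one)
    intervalIntegrable_const (.of_forall fun x hx ↦ ?_)
  exact (hasSum_geometric_of_norm_lt_one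
    ((norm_mul_sq_mul_one_sub_le z (uIoc_zero_one_subset_Icc hx)).trans_lt ratio_lt_one)).mul_left _

/-- The generating function `∑_{n ≥ 1} zⁿ / (n² C(3n, n))`, indexed by `k = n - 1`. -/
noncomputable def invSqChooseSeries (z : ℝ) : ℝ :=
  ∑' k : ℕ, z ^ (k + 1) / (((k : ℝ) + 1) ^ 2 * (((3 * (k + 1)).choose (k + 1) : ℕ) : ℝ))

lemma hasSum_invSqChooseSeries (hz : |z| < 27 / 4) :
    HasSum (fun k : ℕ ↦ z ^ (k + 1) / ((k + 1) ^ 2 * (((3 * (k + 1)).choose (k + 1) : ℕ) : ℝ)))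
      (invSqChooseSeries z) := by
  refine (((hasSum_pow_div_mul_choose hz).summable.norm.mul_left |z|).of_norm_bounded
    fun k ↦ ?_).hasSum
  have term_eq : z ^ (k + 1) / ((k + 1) ^ 2 * (((3 * (k + 1)).choose (k + 1) : ℕ) : ℝ)) =
      z / (k + 1) * (z ^ k / ((k + 1) * (((3 * (k + 1)).choose (k + 1) : ℕ) : ℝ))) := by
    rw [div_mul_div_comm, pow_succ', sq, mul_assoc]
  have : (0 : ℝ) < k + 1 := by positivity
  rw [term_eq, norm_mul, norm_div, norm_eq_abs z, norm_of_nonneg this.le]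
  gcongr
  exact div_le_self (abs_nonneg z) (by simp)

lemma hasDerivAt_pow_div_sq_mul_choose (z : ℝ) (k : ℕ) :
    HasDerivAt
      (fun z : ℝ ↦ z ^ (k + 1) / ((k + 1) ^ 2 * (((3 * (k + 1)).choose (k + 1) : ℕ) : ℝ)))
      (z ^ k / ((k + 1) * (((3 * (k + 1)).choose (k + 1) : ℕ) : ℝ))) z := by
  refine ((hasDerivAt_pow (k + 1) z).div_const _).congr_deriv ?_
  have : (k + 1 : ℝ) ≠ 0 := by positivity
  rw [add_tsub_cancel_right, Nat.cast_add_one, sq, mul_assoc, mul_div_mul_left _ _ this]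

lemma hasDerivAt_invSqChooseSeries (hz : |z| < 27 / 4) :
    HasDerivAt invSqChooseSeries
      (∫ x in (0 : ℝ)..1, x ^ 2 / (1 - z * (x ^ 2 * (1 - x)))) z := by
  obtain ⟨r, hzr, hr⟩ := exists_between hz
  have r_pos : 0 < r := (abs_nonneg z).trans_lt hzr
  rw [← (hasSum_pow_div_mul_choose hz).tsum_eq]
  refine hasDerivAt_tsum_of_isPreconnected (t := Ioo (-r) r) (y₀ := 0)
    (summable_geometric_of_lt_one (r := r * (4 / 27)) (by positivity) (by linarith))
    isOpen_Ioo isPreconnected_Ioo (fun k y _ ↦ hasDerivAt_pow_div_sq_mul_choose y k)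
    (fun k y hy ↦ (norm_pow_div_mul_choose_le y k).trans ?_) (by simpa) (by simp) (abs_lt.1 hzr)
  gcongr
  exact (abs_lt.2 hy).le

end Series

section Parametrization

variable {t x : ℝ}

/-- The parametrization of `z` for which the cubic `1 - z x² (1 - x)` factors rationally in `t`. -/
noncomputable def cubicParam (t : ℝ) : ℝ := (3 - t ^ 2) ^ 3 / (4 * (1 + t ^ 2) ^ 2)

/-- The linear factor of the cubic `1 - z x² (1 - x)` at `z = cubicParam t`, up to a constant. -/
noncomputable def linearFactor (t x : ℝ) : ℝ := 1 + t ^ 2 + (3 - t ^ 2) * x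

/-- The quadratic factor of the cubic `1 - z x² (1 - x)` at `z = cubicParam t`, up to a constant. -/
noncomputable def quadraticFactor (t x : ℝ) : ℝ := (2 - (3 - t ^ 2) * x) ^ 2 + 4 * t ^ 2

lemma one_sub_cubicParam_mul (t x : ℝ) :
    1 - cubicParam t * (x ^ 2 * (1 - x)) =
      linearFactor t x * quadraticFactor t x / (4 * (1 + t ^ 2) ^ 2) := by
  rw [cubicParam, linearFactor, quadraticFactor]
  have : 1 + t ^ 2 ≠ 0 := by positivity
  field_simp
  ring

lemma linearFactor_pos (t : ℝ) (hx : x ∈ Icc (0 : ℝ) 1) : 0 < linearFactor t x := by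
  have : 0 ≤ (1 - x) * t ^ 2 := mul_nonneg (sub_nonneg.2 hx.2) (sq_nonneg t)
  rw [linearFactor]
  linarith [hx.1]

lemma quadraticFactor_pos (ht : t ≠ 0) (x : ℝ) : 0 < quadraticFactor t x := by
  rw [quadraticFactor]
  positivity

lemma one_sub_cubicParam_mul_pos (ht : t ≠ 0) (hx : x ∈ Icc (0 : ℝ) 1) :
    0 < 1 - cubicParam t * (x ^ 2 * (1 - x)) := by
  have := linearFactor_pos t hx
  have := quadraticFactor_pos ht x
  rw [one_sub_cubicParam_mul]
  positivity

lemma cubicParam_mul_div_eq_partial_fractions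
    (hL : linearFactor t x ≠ 0) (hQ : quadraticFactor t x ≠ 0) :
    cubicParam t * (x ^ 2 / (1 - cubicParam t * (x ^ 2 * (1 - x)))) =
      (3 - t ^ 2) / (9 + t ^ 2) * ((1 + t ^ 2) / linearFactor t x +
        (8 * (3 - t ^ 2) * x - 4 * (1 + t ^ 2)) / quadraticFactor t x) := by
  have : 1 + t ^ 2 ≠ 0 := by positivity
  have : 9 + t ^ 2 ≠ 0 := by positivity
  rw [one_sub_cubicParam_mul, cubicParam]
  field_simp
  rw [linearFactor, quadraticFactor]
  ring

lemma hasDerivAt_linearFactor (t x : ℝ) : HasDerivAt (linearFactor t) (3 - t ^ 2) x :=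
  (((hasDerivAt_id' x).const_mul (3 - t ^ 2)).const_add (1 + t ^ 2)).congr_deriv (mul_one _)

lemma hasDerivAt_two_sub_mul (t x : ℝ) :
    HasDerivAt (fun x ↦ 2 - (3 - t ^ 2) * x) (-(3 - t ^ 2)) x :=
  (((hasDerivAt_id' x).const_mul (3 - t ^ 2)).const_sub 2).congr_deriv (congrArg _ (mul_one _))

lemma hasDerivAt_quadraticFactor (t x : ℝ) :
    HasDerivAt (quadraticFactor t) (-(2 * (3 - t ^ 2) * (2 - (3 - t ^ 2) * x))) x := by
  refine (((hasDerivAt_two_sub_mul t x).fun_pow 2).add_const (4 * t ^ 2)).congr_deriv ?_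
  push_cast
  ring

lemma hasDerivAt_arctan_two_sub_mul_div (ht : t ≠ 0) (x : ℝ) :
    HasDerivAt (fun x ↦ arctan ((2 - (3 - t ^ 2) * x) / (2 * t)))
      (-(2 * t * (3 - t ^ 2) / quadraticFactor t x)) x := by
  refine ((hasDerivAt_two_sub_mul t x).div_const (2 * t)).arctan.congr_deriv ?_
  have one_add_sq_eq :
      1 + ((2 - (3 - t ^ 2) * x) / (2 * t)) ^ 2 = quadraticFactor t x / (4 * t ^ 2) := by
    rw [quadraticFactor]
    field_simp
    ring
  have := (quadraticFactor_pos ht x).ne'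
  rw [one_add_sq_eq]
  field_simp
  ring

/-- A primitive in `x` of `z x² / (1 - z x² (1 - x))` at `z = cubicParam t`, from its partial
fraction decomposition. -/
noncomputable def cubicPrimitive (t x : ℝ) : ℝ :=
  ((1 + t ^ 2) * log (linearFactor t x) + 4 * log (quadraticFactor t x)
    - 2 * (3 - t ^ 2) / t * arctan ((2 - (3 - t ^ 2) * x) / (2 * t))) / (9 + t ^ 2)

lemma hasDerivAt_cubicPrimitive (ht : t ≠ 0) (hx : x ∈ Icc (0 : ℝ) 1) :
    HasDerivAt (cubicPrimitive t)
      (cubicParam t * (x ^ 2 / (1 - cubicParam t * (x ^ 2 * (1 - x))))) x := by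
  have hL := (linearFactor_pos t hx).ne'
  have hQ := (quadraticFactor_pos ht x).ne'
  refine ((((((hasDerivAt_linearFactor t x).log hL).const_mul _).add
    (((hasDerivAt_quadraticFactor t x).log hQ).const_mul _)).sub
    ((hasDerivAt_arctan_two_sub_mul_div ht x).const_mul _)).div_const _).congr_deriv ?_
  rw [cubicParam_mul_div_eq_partial_fractions hL hQ]
  field_simp
  ring

lemma arctan_sq_sub_one_div_two_mul (ht : 0 < t) :
    arctan ((t ^ 2 - 1) / (2 * t)) = 2 * arctan t - π / 2 := by
  refine arctan_eq_of_tan_eq ?_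
    ⟨by linarith [arctan_pos.2 ht], by linarith [arctan_lt_pi_div_two t]⟩
  rw [← neg_sub, tan_neg, tan_pi_div_two_sub, tan_two_mul, tan_arctan, inv_div, ← neg_div, neg_sub]

lemma cubicPrimitive_one_sub_zero (ht : 0 < t) :
    cubicPrimitive t 1 - cubicPrimitive t 0 =
      (3 - t ^ 2) / (9 + t ^ 2) * (6 * (π / 3 - arctan t) / t - log (4 / (1 + t ^ 2))) := by
  have one_add_sq_ne_zero : 1 + t ^ 2 ≠ 0 := by positivity
  have arg_one : (2 - (3 - t ^ 2) * 1) / (2 * t) = (t ^ 2 - 1) / (2 * t) := by ring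
  have arg_zero : (2 - (3 - t ^ 2) * 0) / (2 * t) = t⁻¹ := by field_simp; ring
  have linear_one : linearFactor t 1 = 4 := by rw [linearFactor]; ring
  have linear_zero : linearFactor t 0 = 1 + t ^ 2 := by rw [linearFactor]; ring
  have quadratic_one : quadraticFactor t 1 = (1 + t ^ 2) ^ 2 := by rw [quadraticFactor]; ring
  have quadratic_zero : quadraticFactor t 0 = 4 * (1 + t ^ 2) := by rw [quadraticFactor]; ring
  rw [cubicPrimitive, cubicPrimitive, arg_one, arg_zero, linear_one, linear_zero, quadratic_one,
    quadratic_zero, arctan_sq_sub_one_div_two_mul ht, arctan_inv_of_pos ht, log_pow,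
    log_mul four_ne_zero one_add_sq_ne_zero, log_div four_ne_zero one_add_sq_ne_zero]
  field_simp
  push_cast
  ring

lemma cubicParam_mul_integral (ht : 0 < t) :
    cubicParam t * ∫ x in (0 : ℝ)..1, x ^ 2 / (1 - cubicParam t * (x ^ 2 * (1 - x))) =
      (3 - t ^ 2) / (9 + t ^ 2) * (6 * (π / 3 - arctan t) / t - log (4 / (1 + t ^ 2))) := by
  have continuousOn_integrand :
      ContinuousOn (fun x ↦ cubicParam t * (x ^ 2 / (1 - cubicParam t * (x ^ 2 * (1 - x)))))
        (uIcc 0 1) := by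
    rw [uIcc_of_le zero_le_one]
    exact continuousOn_const.mul (ContinuousOn.div (by fun_prop) (by fun_prop)
      fun x hx ↦ (one_sub_cubicParam_mul_pos ht.ne' hx).ne')
  rw [← intervalIntegral.integral_const_mul, ← cubicPrimitive_one_sub_zero ht]
  refine intervalIntegral.integral_eq_sub_of_hasDerivAt (fun x hx ↦ ?_)
    continuousOn_integrand.intervalIntegrable
  rw [uIcc_of_le zero_le_one] at hx
  exact hasDerivAt_cubicPrimitive ht.ne' hx

lemma hasDerivAt_cubicParam (t : ℝ) :
    HasDerivAt cubicParam (-(t * (9 + t ^ 2) * (3 - t ^ 2) ^ 2 / (2 * (1 + t ^ 2) ^ 3))) t := by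
  have hasDerivAt_sq : HasDerivAt (fun t : ℝ ↦ t ^ 2) (2 * t) t := by
    simpa using hasDerivAt_pow 2 t
  have : 1 + t ^ 2 ≠ 0 := by positivity
  refine (((hasDerivAt_sq.const_sub 3).fun_pow 3).fun_div
    (((hasDerivAt_sq.const_add 1).fun_pow 2).const_mul 4) (by positivity)).congr_deriv ?_
  field_simp
  push_cast
  ring

lemma antitoneOn_cubicParam : AntitoneOn cubicParam (Ici 0) := by
  refine antitoneOn_of_hasDerivWithinAt_nonpos (convex_Ici 0)
    (fun t _ ↦ (hasDerivAt_cubicParam t).continuousAt.continuousWithinAt)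
    (fun t _ ↦ (hasDerivAt_cubicParam t).hasDerivWithinAt) fun t ht ↦ ?_
  rw [interior_Ici, mem_Ioi] at ht
  exact neg_nonpos.2 (by positivity)

lemma cubicParam_lt (ht : t ≠ 0) : cubicParam t < 27 / 4 := by
  rw [cubicParam, div_lt_iff₀ (by positivity)]
  have : 0 < t ^ 6 + 18 * t ^ 4 + 81 * t ^ 2 := by positivity
  linarith

lemma cubicParam_sqrt_three : cubicParam √3 = 0 := by
  simp [cubicParam]

/-- The positive parameters `t` for which `cubicParam t` is in the open interval of convergence
of `invSqChooseSeries`; `cubicParam t < 27 / 4` holds for all of them by `cubicParam_lt`. -/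
def cubicParamDomain : Set ℝ := {t | 0 < t ∧ -(27 / 4) < cubicParam t}

lemma isOpen_cubicParamDomain : IsOpen cubicParamDomain := by
  have continuous_cubicParam : Continuous cubicParam :=
    continuous_iff_continuousAt.2 fun t ↦ (hasDerivAt_cubicParam t).continuousAt
  exact (isOpen_lt continuous_const continuous_id).inter
    (isOpen_lt continuous_const continuous_cubicParam)

lemma isPreconnected_cubicParamDomain : IsPreconnected cubicParamDomain := by
  refine (ordConnected_def.2 fun a ha b hb c hc ↦ ?_).isPreconnected
  have c_pos : 0 < c := ha.1.trans_le hc.1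
  exact ⟨c_pos, hb.2.trans_le (antitoneOn_cubicParam c_pos.le hb.1.le hc.2)⟩

lemma sqrt_three_mem_cubicParamDomain : √3 ∈ cubicParamDomain :=
  ⟨by positivity, by rw [cubicParam_sqrt_three]; norm_num⟩

end Parametrization

section ClosedForm

variable {t : ℝ}

/-- The closed form of `invSqChooseSeries (cubicParam t)`. -/
noncomputable def arctanLogForm (t : ℝ) : ℝ :=
  6 * (π / 3 - arctan t) ^ 2 - 1 / 2 * log (4 / (1 + t ^ 2)) ^ 2

lemma arctanLogForm_sqrt_three : arctanLogForm √3 = 0 := by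
  rw [arctanLogForm, arctan_sqrt_three, sq_sqrt (by norm_num)]
  norm_num

lemma hasDerivAt_arctanLogForm (t : ℝ) :
    HasDerivAt arctanLogForm
      ((2 * t * log (4 / (1 + t ^ 2)) - 12 * (π / 3 - arctan t)) / (1 + t ^ 2)) t := by
  have : 1 + t ^ 2 ≠ 0 := by positivity
  have hasDerivAt_one_add_sq : HasDerivAt (fun t : ℝ ↦ 1 + t ^ 2) (2 * t) t := by
    simpa using (hasDerivAt_pow 2 t).const_add 1
  have hasDerivAt_log : HasDerivAt (fun t ↦ log (4 / (1 + t ^ 2))) (-(2 * t / (1 + t ^ 2))) t := by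
    refine (((hasDerivAt_const t 4).fun_div hasDerivAt_one_add_sq this).log
      (by positivity)).congr_deriv ?_
    field_simp
    ring
  refine (((((hasDerivAt_id' t).arctan.const_sub (π / 3)).fun_pow 2).const_mul 6).sub
    ((hasDerivAt_log.fun_pow 2).const_mul (1 / 2))).congr_deriv ?_
  field_simp
  push_cast
  ring

lemma hasDerivAt_invSqChooseSeries_cubicParam (ht : t ∈ cubicParamDomain) :
    HasDerivAt (invSqChooseSeries ∘ cubicParam)
      ((2 * t * log (4 / (1 + t ^ 2)) - 12 * (π / 3 - arctan t)) / (1 + t ^ 2)) t := by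
  have t_pos : 0 < t := ht.1
  refine ((hasDerivAt_invSqChooseSeries (abs_lt.2 ⟨ht.2, cubicParam_lt t_pos.ne'⟩)).comp t
    (hasDerivAt_cubicParam t)).congr_deriv ?_
  rcases eq_or_ne (3 - t ^ 2) 0 with h_zero | h_ne
  · obtain rfl : t = √3 := (sqrt_eq_iff_eq_sq (by norm_num) t_pos.le |>.2 (by linarith)).symm
    rw [arctan_sqrt_three, sq_sqrt (by norm_num)]
    norm_num
  · have integral_eq := cubicParam_mul_integral t_pos
    set I := ∫ x in (0 : ℝ)..1, x ^ 2 / (1 - cubicParam t * (x ^ 2 * (1 - x)))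
    have deriv_eq : I * -(t * (9 + t ^ 2) * (3 - t ^ 2) ^ 2 / (2 * (1 + t ^ 2) ^ 3)) =
        -(2 * t * (9 + t ^ 2) / ((3 - t ^ 2) * (1 + t ^ 2))) * (cubicParam t * I) := by
      rw [cubicParam]
      field_simp
      ring
    rw [deriv_eq, integral_eq]
    field_simp
    ring

lemma eqOn_invSqChooseSeries_cubicParam :
    EqOn (invSqChooseSeries ∘ cubicParam) arctanLogForm cubicParamDomain := by
  refine isOpen_cubicParamDomain.eqOn_of_deriv_eq isPreconnected_cubicParamDomain
    (fun t ht ↦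
      (hasDerivAt_invSqChooseSeries_cubicParam ht).differentiableAt.differentiableWithinAt)
    (fun t _ ↦ (hasDerivAt_arctanLogForm t).differentiableAt.differentiableWithinAt)
    (fun t ht ↦ ?_) sqrt_three_mem_cubicParamDomain ?_
  · rw [(hasDerivAt_invSqChooseSeries_cubicParam ht).deriv, (hasDerivAt_arctanLogForm t).deriv]
  · rw [Function.comp_apply, cubicParam_sqrt_three, arctanLogForm_sqrt_three]
    simp [invSqChooseSeries]

theorem stmt_12_general (ht : 0 < t) (hz : -(27 / 4) < cubicParam t) :
    HasSum (fun k : ℕ ↦ cubicParam t ^ (k + 1) /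
        ((k + 1) ^ 2 * (((3 * (k + 1)).choose (k + 1) : ℕ) : ℝ)))
      (6 * (π / 3 - arctan t) ^ 2 - 1 / 2 * log (4 / (1 + t ^ 2)) ^ 2) := by
  rw [← arctanLogForm, ← eqOn_invSqChooseSeries_cubicParam ⟨ht, hz⟩]
  exact hasSum_invSqChooseSeries (abs_lt.2 ⟨hz, cubicParam_lt ht.ne'⟩)

end ClosedForm

lemma cubicParam_sqrt_three_div_five : cubicParam (√3 / 5) = 5832 / 1225 := by
  rw [cubicParam, div_pow, sq_sqrt (by norm_num)]
  norm_num

lemma pi_div_three_sub_arctan_sqrt_three_div_five :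
    π / 3 - arctan (√3 / 5) = arctan (√3 / 2) := by
  have sq_sqrt_three : √3 ^ 2 = 3 := sq_sqrt (by norm_num)
  rw [sub_eq_iff_eq_add, ← arctan_sqrt_three, arctan_add (by linarith)]
  congr 1
  rw [eq_div_iff (by linarith)]
  linear_combination (-√3 / 10) * sq_sqrt_three

theorem stmt_12 :
    ∑' k : ℕ, (5832/1225 : ℝ)^(k+1) / (((k:ℝ)+1)^2 * (((3*(k+1)).choose (k+1) : ℕ) : ℝ)) =
    6*(Real.arctan (Real.sqrt 3/2))^2 - (1/2)*(Real.log (25/7))^2 := by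
  have log_arg : 4 / (1 + (√3 / 5) ^ 2) = 25 / 7 := by
    rw [div_pow, sq_sqrt (by norm_num)]
    norm_num
  rw [← cubicParam_sqrt_three_div_five, ← pi_div_three_sub_arctan_sqrt_three_div_five, ← log_arg]
  exact (stmt_12_general (by positivity)
    (by rw [cubicParam_sqrt_three_div_five]; norm_num)).tsum_eq
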